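/- Limsup inequality (recovery sequences): let (a,b) ⊂ ℝ be a bounded interval and p ∈ [1,+∞). For every step function u ∈ S((a,b)) there exists a sequence {u_n} with u_n ∈ PC_{δ(n)}(a,b) for every n≥2 such that u_n → u in L^p((a,b)) and limsup_{n→+∞} RDPM_n((a,b),u_n) ≤ (4/3)·J((a,b),u). -/

import Mathlib

/-!
The recovery sequence is plain sampling of the step function on the grid. Write
`u = c + ∑ J_q 1_{[q,∞)}` and extend it to `ℝ` by the same formula (`stepFn`); put
`u_n x = stepFn (δ ⌊x/δ⌋)` with `δ = δ(n)`.

* Since `δ ⌊x/δ⌋ → x`, `u_n → u` at every point off the finite jump set, and everything is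
  uniformly bounded, so the `L^p` convergence is dominated convergence.
* The discrete derivative of `u_n` vanishes except on the cells `[δ(⌈q/δ⌉-1), δ⌈q/δ⌉)`, one of
  length `δ` for each jump point `q`, where it is at most `C/δ` with `C = ∑ |J_q|`
  (`log_Dd_sample_le`). Hence
  `RDPM_n(u_n) ≤ #S_u · (δ/ω²) · log (1 + C²/δ²)` (`RDPM_sample_le`).
* As `δ/ω² = 1/log n` and `1/δ² = n^{4/3} (log n)^{2/3}`, the factor of `#S_u` tends to `4/3`
  (`tendsto_jump_cost`).

Finally `S_u` is the set of discontinuities of `u` in `(a,b)` (`jumpSet_eq`), because every `J_q`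
is nonzero.
-/


open MeasureTheory Filter Set

namespace PeronaMalik

/-- `a_{δ,*} = δ⌊a/δ⌋`, the lower `δ`-approximation of `a`. -/
noncomputable def lowGrid (δ a : ℝ) : ℝ := δ * (⌊a / δ⌋ : ℤ)

/-- `b_δ^* = δ⌈b/δ⌉`, the upper `δ`-approximation of `b`. -/
noncomputable def highGrid (δ b : ℝ) : ℝ := δ * (⌈b / δ⌉ : ℤ)

/-- `u` is piecewise constant at scale `δ`: constant on every interval `[zδ, (z+1)δ)`. -/
def IsPC (δ : ℝ) (u : ℝ → ℝ) : Prop :=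
  ∀ z : ℤ, ∀ x ∈ Set.Ico ((z : ℝ) * δ) (((z : ℝ) + 1) * δ), u x = u ((z : ℝ) * δ)

/-- Discrete derivative `D^δ u (x) = (u(x+δ) - u(x))/δ`. -/
noncomputable def Dd (δ : ℝ) (u : ℝ → ℝ) (x : ℝ) : ℝ := (u (x + δ) - u x) / δ

/-- The discrete Perona–Malik functional with fidelity term on `(a,b)`. -/
noncomputable def DPMF (n : ℕ) (β : ℝ) (f : ℝ → ℝ) (a b : ℝ) (u : ℝ → ℝ) : ℝ :=
  (∫ x in lowGrid (1 / (n : ℝ)) a..(highGrid (1 / (n : ℝ)) b - 1 / (n : ℝ)),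
      Real.log (1 + (Dd (1 / (n : ℝ)) u x) ^ 2)) +
    β * ∫ x in a..b, (u x - f x) ^ 2

/-- `u` is a minimizer of `DPMF n β f (0,1)` over `PC_{1/n}(0,1)`. -/
def IsMinimizer (n : ℕ) (β : ℝ) (f : ℝ → ℝ) (u : ℝ → ℝ) : Prop :=
  IsPC (1 / (n : ℝ)) u ∧
    ∀ v : ℝ → ℝ, IsPC (1 / (n : ℝ)) v → DPMF n β f 0 1 u ≤ DPMF n β f 0 1 v

/-- `m(n,β,f)`, the minimum value of the discrete Perona–Malik functional. -/
noncomputable def mval (n : ℕ) (β : ℝ) (f : ℝ → ℝ) : ℝ :=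
  sInf ((fun u => DPMF n β f 0 1 u) '' {u | IsPC (1 / (n : ℝ)) u})

/-- `ω(n) = (log n / n)^{1/3}`. -/
noncomputable def omg (n : ℕ) : ℝ := (Real.log n / n) ^ ((1 : ℝ) / 3)

/-- `δ(n) = 1/(n ω(n))`. -/
noncomputable def dlt (n : ℕ) : ℝ := 1 / ((n : ℝ) * omg n)

/-- The rescaled discrete Perona–Malik functional. -/
noncomputable def RDPM (n : ℕ) (a b : ℝ) (u : ℝ → ℝ) : ℝ :=
  (1 / omg n ^ 2) *
    ∫ x in lowGrid (dlt n) a..(highGrid (dlt n) b - dlt n),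
      Real.log (1 + (Dd (dlt n) u x) ^ 2)

/-- The rescaled discrete Perona–Malik functional with fidelity term. -/
noncomputable def RDPMF (n : ℕ) (β : ℝ) (f : ℝ → ℝ) (a b : ℝ) (u : ℝ → ℝ) : ℝ :=
  RDPM n a b u + β * ∫ x in Set.Ioo a b, (u x - f x) ^ 2

/-- `u` is a step function with finitely many jumps on `(a,b)`. -/
def IsStep (a b : ℝ) (u : ℝ → ℝ) : Prop :=
  ∃ (s : Finset ℝ) (c : ℝ) (J : ℝ → ℝ),
    (∀ p ∈ s, p ∈ Set.Ioo a b ∧ J p ≠ 0) ∧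
    ∀ x ∈ Set.Ioo a b, u x = c + ∑ p ∈ s, (if p ≤ x then J p else 0)

/-- The set of jump (discontinuity) points of `u` inside `(a,b)`. -/
def jumpSet (a b : ℝ) (u : ℝ → ℝ) : Set ℝ :=
  {x ∈ Set.Ioo a b | ¬ ContinuousAt u x}

/-- The limit functional `JF(α,β,f,(a,b),u) = α·#jumps + β∫(u-f)²`. -/
noncomputable def JF (α β : ℝ) (f : ℝ → ℝ) (a b : ℝ) (u : ℝ → ℝ) : ℝ :=
  α * ((jumpSet a b u).ncard : ℝ) + β * ∫ x in Set.Ioo a b, (u x - f x) ^ 2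

/-- Strict convergence in `BV((a,b))`: `L¹` convergence plus convergence of
total variations. -/
def StrictBV (useq : ℕ → ℝ → ℝ) (u : ℝ → ℝ) (a b : ℝ) : Prop :=
  Tendsto (fun k => ∫ x in Set.Ioo a b, |useq k x - u x|) atTop (nhds 0) ∧
  Tendsto (fun k => eVariationOn (useq k) (Set.Ioo a b)) atTop
    (nhds (eVariationOn u (Set.Ioo a b)))

/-- Locally strict convergence in `BV_loc(ℝ)`: strict convergence on every bounded
interval whose endpoints are not jump points of the limit. -/
def LocStrictBV (useq : ℕ → ℝ → ℝ) (u : ℝ → ℝ) : Prop :=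
  ∀ a b : ℝ, a < b → ContinuousAt u a → ContinuousAt u b → StrictBV useq u a b

/-- `S(x) = 2⌊(x+1)/2⌋`. -/
noncomputable def stairS (x : ℝ) : ℝ := 2 * (⌊(x + 1) / 2⌋ : ℤ)

/-- The canonical `(H,V)`-staircase `S_{H,V}(x) = V·S(x/H)`. -/
noncomputable def canStair (H V : ℝ) (x : ℝ) : ℝ := V * stairS (x / H)

/-- Oblique translations of the canonical `(H,V)`-staircase. -/
def Obl (H V : ℝ) (v : ℝ → ℝ) : Prop :=
  ∃ τ ∈ Set.Icc (-1 : ℝ) 1, ∀ x, v x = canStair H V (x - H * τ) + V * τ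

/-- Graph translations of horizontal type of the canonical `(H,V)`-staircase. -/
def Orz (H V : ℝ) (v : ℝ → ℝ) : Prop :=
  ∃ τ ∈ Set.Icc (-1 : ℝ) 1, ∀ x, v x = canStair H V (x - H * τ)

/-- `μ_n(β,L,M)`: minimum of the rescaled functional with affine forcing term. -/
noncomputable def muDisc (n : ℕ) (β L M : ℝ) : ℝ :=
  sInf ((fun u => RDPMF n β (fun x => M * x) 0 L u) '' {u | IsPC (dlt n) u})

/-- `μ*_n(β,L,M)`: same as `μ_n` but with boundary conditions `u(0)=0`, `u(L^*)=ML`. -/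
noncomputable def muDiscStar (n : ℕ) (β L M : ℝ) : ℝ :=
  sInf ((fun u => RDPMF n β (fun x => M * x) 0 L u) ''
    {u | IsPC (dlt n) u ∧ u 0 = 0 ∧ u (highGrid (dlt n) L - dlt n) = M * L})

/-- `μ(α,β,L,M)`: minimum of the limit functional with affine forcing term. -/
noncomputable def muLim (α β L M : ℝ) : ℝ :=
  sInf ((fun u => JF α β (fun x => M * x) 0 L u) '' {u | IsStep 0 L u})

/-- `μ*(α,β,L,M)`: same as `μ` but with boundary values `u(0⁺)=0`, `u(L⁻)=ML`. -/
noncomputable def muLimStar (α β L M : ℝ) : ℝ :=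
  sInf ((fun u => JF α β (fun x => M * x) 0 L u) ''
    {u | IsStep 0 L u ∧ Tendsto u (nhdsWithin 0 (Set.Ioi 0)) (nhds 0) ∧
         Tendsto u (nhdsWithin L (Set.Iio L)) (nhds (M * L))})

/-- `u` and `v` have the same boundary values `u(a⁺)=v(a⁺)`, `u(b⁻)=v(b⁻)`. -/
def SameBdry (a b : ℝ) (u v : ℝ → ℝ) : Prop :=
  (∀ c : ℝ, Tendsto v (nhdsWithin a (Set.Ioi a)) (nhds c) →
     Tendsto u (nhdsWithin a (Set.Ioi a)) (nhds c)) ∧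
  (∀ c : ℝ, Tendsto v (nhdsWithin b (Set.Iio b)) (nhds c) →
     Tendsto u (nhdsWithin b (Set.Iio b)) (nhds c))

/-- `v` is a local minimizer for `JF(α,β,f,(a,b),·)` among step functions with the
same boundary values. -/
def IsLocalMinJF (α β : ℝ) (f : ℝ → ℝ) (a b : ℝ) (v : ℝ → ℝ) : Prop :=
  IsStep a b v ∧
  ∀ u : ℝ → ℝ, IsStep a b u → SameBdry a b u v → JF α β f a b v ≤ JF α β f a b u

/-- `v` is an entire local minimizer for `JF(α,β,f,·,·)`. -/
def IsEntireLocalMinJF (α β : ℝ) (f : ℝ → ℝ) (v : ℝ → ℝ) : Prop :=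
  ∀ a b : ℝ, a < b → IsLocalMinJF α β f a b v

/-- `v` is a local minimizer for `RDPMF_n(β,f,(a,b),·)` among piecewise constant
functions with the same boundary values. -/
def IsLocalMinRDPMF (n : ℕ) (β : ℝ) (f : ℝ → ℝ) (a b : ℝ) (v : ℝ → ℝ) : Prop :=
  IsPC (dlt n) v ∧
  ∀ u : ℝ → ℝ, IsPC (dlt n) u →
    u (lowGrid (dlt n) a) = v (lowGrid (dlt n) a) →
    u (highGrid (dlt n) b - dlt n) = v (highGrid (dlt n) b - dlt n) →
    RDPMF n β f a b v ≤ RDPMF n β f a b u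

/-! ### Step functions and their jump points -/

/-- The step function on all of `ℝ` with base value `c`, jump points `s` and jump heights `J`,
right-continuous at every jump. -/
noncomputable def stepFn (s : Finset ℝ) (c : ℝ) (J : ℝ → ℝ) (x : ℝ) : ℝ :=
  c + ∑ q ∈ s, (if q ≤ x then J q else 0)

lemma continuousAt_heaviside {q x : ℝ} (h : q ≠ x) (j : ℝ) :
    ContinuousAt (fun y : ℝ => if q ≤ y then j else 0) x := by
  rcases lt_or_gt_of_ne h with h | h
  · refine (continuousAt_const (y := j)).congr ?_
    filter_upwards [Ioi_mem_nhds h] with y hy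
    rw [if_pos (le_of_lt hy)]
  · refine (continuousAt_const (y := (0 : ℝ))).congr ?_
    filter_upwards [Iio_mem_nhds h] with y hy
    rw [if_neg (not_le.mpr hy)]

lemma not_continuousAt_heaviside (q : ℝ) {j : ℝ} (hj : j ≠ 0) :
    ¬ ContinuousAt (fun y : ℝ => if q ≤ y then j else 0) q := by
  intro h
  have h1 : Tendsto (fun y : ℝ => if q ≤ y then j else 0) (nhdsWithin q (Iio q)) (nhds j) := by
    have := h.tendsto.mono_left (nhdsWithin_le_nhds (s := Iio q))
    simpa using this
  have h2 : Tendsto (fun y : ℝ => if q ≤ y then j else 0) (nhdsWithin q (Iio q)) (nhds 0) := by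
    refine tendsto_const_nhds.congr' ?_
    filter_upwards [self_mem_nhdsWithin] with y hy
    rw [if_neg (not_le.mpr hy)]
  exact hj (tendsto_nhds_unique h1 h2)

lemma continuousAt_stepFn {s : Finset ℝ} {c : ℝ} {J : ℝ → ℝ} {x : ℝ} (hx : x ∉ s) :
    ContinuousAt (stepFn s c J) x := by
  unfold stepFn
  refine continuousAt_const.add (tendsto_finsetSum _ fun q hq => ?_)
  have hne : q ≠ x := fun h => hx (h ▸ hq)
  exact continuousAt_heaviside hne (J q)

lemma not_continuousAt_stepFn {s : Finset ℝ} {c : ℝ} {J : ℝ → ℝ} {x : ℝ} (hx : x ∈ s)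
    (hJ : J x ≠ 0) : ¬ ContinuousAt (stepFn s c J) x := by
  intro h
  -- Subtracting the step function without the jump at `x` isolates that jump.
  have h1 : ContinuousAt (stepFn (s.erase x) c J) x :=
    continuousAt_stepFn (Finset.notMem_erase x s)
  refine not_continuousAt_heaviside x hJ ((h.sub h1).congr (Eventually.of_forall fun y => ?_))
  simp only [stepFn, Pi.sub_apply]
  rw [← Finset.add_sum_erase s _ hx]
  ring

lemma measurable_stepFn (s : Finset ℝ) (c : ℝ) (J : ℝ → ℝ) : Measurable (stepFn s c J) := by
  unfold stepFn
  refine measurable_const.add (Finset.measurable_fun_sum _ fun q _ => ?_)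
  exact Measurable.ite measurableSet_Ici measurable_const measurable_const

lemma abs_stepFn_sub_le (s : Finset ℝ) (c : ℝ) (J : ℝ → ℝ) (x y : ℝ) :
    |stepFn s c J x - stepFn s c J y| ≤ ∑ q ∈ s, |J q| := by
  have : stepFn s c J x - stepFn s c J y
      = ∑ q ∈ s, ((if q ≤ x then J q else 0) - (if q ≤ y then J q else 0)) := by
    rw [Finset.sum_sub_distrib]; simp only [stepFn]; ring
  rw [this]
  refine (Finset.abs_sum_le_sum_abs _ _).trans (Finset.sum_le_sum fun q _ => ?_)
  split_ifs <;> simp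

lemma jumpSet_eq {a b : ℝ} {u : ℝ → ℝ} {s : Finset ℝ} {c : ℝ} {J : ℝ → ℝ}
    (hs : ∀ p ∈ s, p ∈ Set.Ioo a b ∧ J p ≠ 0)
    (hu : ∀ x ∈ Set.Ioo a b, u x = stepFn s c J x) : jumpSet a b u = ↑s := by
  have key : ∀ x ∈ Set.Ioo a b, (ContinuousAt u x ↔ ContinuousAt (stepFn s c J) x) := by
    intro x hx
    refine continuousAt_congr ?_
    filter_upwards [isOpen_Ioo.mem_nhds hx] with y hy using hu y hy
  ext x
  constructor
  · rintro ⟨hx, hc⟩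
    by_contra hxs
    exact hc ((key x hx).2 (continuousAt_stepFn hxs))
  · intro hx
    obtain ⟨h1, h2⟩ := hs x hx
    exact ⟨h1, fun h => not_continuousAt_stepFn hx h2 ((key x h1).1 h)⟩

/-! ### Sampling on the grid -/

/-- The function `x ↦ v (δ ⌊x/δ⌋)`, which takes on each cell `[zδ,(z+1)δ)` the value of `v` at
the left endpoint. -/
noncomputable def gridSample (δ : ℝ) (v : ℝ → ℝ) (x : ℝ) : ℝ := v (lowGrid δ x)

lemma isPC_sample {δ : ℝ} (hδ : 0 < δ) (v : ℝ → ℝ) : IsPC δ (gridSample δ v) := by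
  intro z x hx
  have h1 : ⌊x / δ⌋ = z := by
    rw [Int.floor_eq_iff, le_div_iff₀ hδ, div_lt_iff₀ hδ]
    exact hx
  have h2 : ⌊(z : ℝ) * δ / δ⌋ = z := by
    rw [mul_div_cancel_right₀ _ hδ.ne', Int.floor_intCast]
  simp only [gridSample, lowGrid, h1, h2]

lemma lowGrid_le {δ : ℝ} (hδ : 0 < δ) (x : ℝ) : lowGrid δ x ≤ x := by
  have := (le_div_iff₀ hδ).1 (Int.floor_le (x / δ))
  unfold lowGrid; linarith

lemma lt_lowGrid_add {δ : ℝ} (hδ : 0 < δ) (x : ℝ) : x < lowGrid δ x + δ := by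
  have := (div_lt_iff₀ hδ).1 (Int.lt_floor_add_one (x / δ))
  unfold lowGrid; linarith

lemma lowGrid_add {δ : ℝ} (hδ : 0 < δ) (x : ℝ) : lowGrid δ (x + δ) = lowGrid δ x + δ := by
  unfold lowGrid
  rw [add_div, div_self hδ.ne', Int.floor_add_one]
  push_cast; ring

lemma measurable_lowGrid (δ : ℝ) : Measurable (lowGrid δ) := by
  unfold lowGrid
  fun_prop

lemma le_highGrid {δ : ℝ} (hδ : 0 < δ) (x : ℝ) : x ≤ highGrid δ x := by
  have := (div_le_iff₀ hδ).1 (Int.le_ceil (x / δ))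
  unfold highGrid; linarith

/-- Two distinct grid points are at least `δ` apart, so the domain of integration in `RDPM` is
correctly oriented. -/
lemma lowGrid_le_highGrid_sub {δ a b : ℝ} (hδ : 0 < δ) (hab : a < b) :
    lowGrid δ a ≤ highGrid δ b - δ := by
  have h1 : lowGrid δ a < highGrid δ b :=
    (lowGrid_le hδ a).trans_lt (hab.trans_le (le_highGrid hδ b))
  unfold lowGrid highGrid at *
  have h2 : ⌊a / δ⌋ < ⌈b / δ⌉ := by
    exact_mod_cast lt_of_mul_lt_mul_left h1 hδ.le
  have h3 : (⌊a / δ⌋ : ℝ) + 1 ≤ ⌈b / δ⌉ := by exact_mod_cast h2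
  nlinarith

/-- The cell on which the discrete derivative of a sampled function sees a jump at `q`. -/
def cell (δ q : ℝ) : Set ℝ := Set.Ico (highGrid δ q - δ) (highGrid δ q)

lemma mem_cell {δ q x : ℝ} (hδ : 0 < δ) (h1 : lowGrid δ x < q) (h2 : q ≤ lowGrid δ x + δ) :
    x ∈ cell δ q := by
  have hc : ⌈q / δ⌉ = ⌊x / δ⌋ + 1 := by
    rw [Int.ceil_eq_iff, lt_div_iff₀ hδ, div_le_iff₀ hδ]
    unfold lowGrid at *
    push_cast
    constructor <;> linarith
  have hh : highGrid δ q = lowGrid δ x + δ := by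
    unfold highGrid lowGrid
    rw [hc]; push_cast; ring
  refine ⟨?_, ?_⟩
  · rw [hh]; linarith [lowGrid_le hδ x]
  · rw [hh]; exact lt_lowGrid_add hδ x

/-! ### The energy of the sampled step function -/

lemma log_Dd_sample_le {δ : ℝ} (hδ : 0 < δ) (s : Finset ℝ) (c : ℝ) (J : ℝ → ℝ) (x : ℝ) :
    Real.log (1 + (Dd δ (gridSample δ (stepFn s c J)) x) ^ 2) ≤
      ∑ q ∈ s, (cell δ q).indicator
        (fun _ => Real.log (1 + ((∑ q ∈ s, |J q|) / δ) ^ 2)) x := by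
  set C := ∑ q ∈ s, |J q| with hC
  have hL : 0 ≤ Real.log (1 + (C / δ) ^ 2) := Real.log_nonneg (by nlinarith [sq_nonneg (C / δ)])
  have hnn : ∀ q ∈ s,
      0 ≤ (cell δ q).indicator (fun _ => Real.log (1 + (C / δ) ^ 2)) x :=
    fun q _ => Set.indicator_nonneg (fun _ _ => hL) x
  by_cases h : ∃ q ∈ s, x ∈ cell δ q
  · obtain ⟨q, hq, hx⟩ := h
    refine le_trans ?_ (Finset.single_le_sum hnn hq)
    rw [Set.indicator_of_mem hx]
    refine Real.log_le_log (by positivity) ?_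
    have : |Dd δ (gridSample δ (stepFn s c J)) x| ≤ C / δ := by
      unfold Dd
      rw [abs_div, abs_of_pos hδ]
      exact div_le_div_of_nonneg_right (abs_stepFn_sub_le s c J _ _) hδ.le
    have h2 := pow_le_pow_left₀ (abs_nonneg _) this 2
    rw [sq_abs] at h2
    linarith
  · push Not at h
    have hD : Dd δ (gridSample δ (stepFn s c J)) x = 0 := by
      have : gridSample δ (stepFn s c J) (x + δ) = gridSample δ (stepFn s c J) x := by
        simp only [gridSample, stepFn, lowGrid_add hδ]
        congr 1
        refine Finset.sum_congr rfl fun q hq => ?_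
        have hiff : q ≤ lowGrid δ x + δ ↔ q ≤ lowGrid δ x := by
          constructor
          · intro h2
            by_contra h1
            exact h q hq (mem_cell hδ (not_le.1 h1) h2)
          · intro h1; linarith
        simp only [hiff]
      unfold Dd
      rw [this, sub_self, zero_div]
    rw [hD]
    simpa using Finset.sum_nonneg hnn

lemma integral_log_Dd_nonneg {δ a b : ℝ} (hδ : 0 < δ) (hab : a < b) (v : ℝ → ℝ) :
    0 ≤ ∫ x in lowGrid δ a..(highGrid δ b - δ), Real.log (1 + (Dd δ v x) ^ 2) :=
  intervalIntegral.integral_nonneg (lowGrid_le_highGrid_sub hδ hab)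
    fun x _ => Real.log_nonneg (by nlinarith [sq_nonneg (Dd δ v x)])

lemma integral_log_Dd_sample_le {δ a b : ℝ} (hδ : 0 < δ) (hab : a < b) (s : Finset ℝ) (c : ℝ)
    (J : ℝ → ℝ) :
    ∫ x in lowGrid δ a..(highGrid δ b - δ),
        Real.log (1 + (Dd δ (gridSample δ (stepFn s c J)) x) ^ 2) ≤
      s.card * (δ * Real.log (1 + ((∑ q ∈ s, |J q|) / δ) ^ 2)) := by
  set L := Real.log (1 + ((∑ q ∈ s, |J q|) / δ) ^ 2) with hLdef
  have hL : 0 ≤ L := Real.log_nonneg (by nlinarith [sq_nonneg ((∑ q ∈ s, |J q|) / δ)])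
  have hint : ∀ q ∈ s, Integrable ((cell δ q).indicator (fun _ => L)) := fun q _ =>
    (integrable_indicator_iff measurableSet_Ico).2 
      (integrableOn_const (by simp) (by simp))
  have hsum : Integrable (fun x => ∑ q ∈ s, (cell δ q).indicator (fun _ => L) x) :=
    integrable_finsetSum s hint
  rw [intervalIntegral.integral_of_le (lowGrid_le_highGrid_sub hδ hab)]
  calc _ ≤ ∫ x in Set.Ioc (lowGrid δ a) (highGrid δ b - δ),
          ∑ q ∈ s, (cell δ q).indicator (fun _ => L) x := by
        refine integral_mono_of_nonneg (Eventually.of_forall fun x => ?_) hsum.integrableOn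
          (Eventually.of_forall fun x => log_Dd_sample_le hδ s c J x)
        exact Real.log_nonneg
          (by nlinarith [sq_nonneg (Dd δ (gridSample δ (stepFn s c J)) x)])
    _ ≤ ∫ x, ∑ q ∈ s, (cell δ q).indicator (fun _ => L) x :=
        setIntegral_le_integral hsum (Eventually.of_forall fun x =>
          Finset.sum_nonneg fun q _ => Set.indicator_nonneg (fun _ _ => hL) x)
    _ = s.card * (δ * L) := by
        rw [integral_finsetSum s hint, ← nsmul_eq_mul, ← Finset.sum_const]
        refine Finset.sum_congr rfl fun q _ => ?_
        rw [cell, integral_indicator measurableSet_Ico]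
        simp [hδ.le]

/-! ### Asymptotics of the cost of one jump -/

lemma omg_pos {n : ℕ} (hn : 2 ≤ n) : 0 < omg n := by
  have h1 : (1 : ℝ) < n := by exact_mod_cast hn
  exact Real.rpow_pos_of_pos (div_pos (Real.log_pos h1) (by linarith)) _

lemma dlt_pos {n : ℕ} (hn : 2 ≤ n) : 0 < dlt n := by
  have h1 : (0 : ℝ) < n := by exact_mod_cast (by omega : 0 < n)
  exact one_div_pos.2 (mul_pos h1 (omg_pos hn))

lemma omg_pow_three {n : ℕ} (hn : 2 ≤ n) : omg n ^ 3 = Real.log n / n := by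
  have h1 : (1 : ℝ) < n := by exact_mod_cast hn
  unfold omg
  rw [← Real.rpow_natCast, ← Real.rpow_mul (div_pos (Real.log_pos h1) (by linarith)).le]
  norm_num

lemma log_omg {n : ℕ} (hn : 2 ≤ n) :
    Real.log (omg n) = (Real.log (Real.log n) - Real.log n) / 3 := by
  have h1 : (1 : ℝ) < n := by exact_mod_cast hn
  have h2 := Real.log_pos h1
  unfold omg
  rw [Real.log_rpow (div_pos h2 (by linarith)), Real.log_div h2.ne' (by linarith)]
  ring

lemma dlt_div_omg_sq {n : ℕ} (hn : 2 ≤ n) : dlt n / omg n ^ 2 = 1 / Real.log n := by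
  have h1 : (1 : ℝ) < n := by exact_mod_cast hn
  have h2 := Real.log_pos h1
  have h3 := omg_pow_three hn
  have h4 := omg_pos hn
  have h5 : (n : ℝ) * omg n ^ 3 = Real.log n := by
    rw [h3]; field_simp
  unfold dlt
  rw [← h5]
  field_simp

lemma log_dlt {n : ℕ} (hn : 2 ≤ n) :
    Real.log (dlt n) = -(2 / 3 * Real.log n + 1 / 3 * Real.log (Real.log n)) := by
  have h1 : (0 : ℝ) < n := by exact_mod_cast (by omega : 0 < n)
  unfold dlt
  rw [one_div, Real.log_inv, Real.log_mul h1.ne' (omg_pos hn).ne', log_omg hn]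
  ring

lemma tendsto_log_natCast : Tendsto (fun n : ℕ => Real.log n) atTop atTop :=
  Real.tendsto_log_atTop.comp tendsto_natCast_atTop_atTop

lemma tendsto_dlt : Tendsto dlt atTop (nhds 0) := by
  have h2 := Real.tendsto_log_atTop.comp tendsto_log_natCast
  have h : Tendsto (fun n : ℕ => Real.exp (-(2 / 3 * Real.log n + 1 / 3 * Real.log (Real.log n))))
      atTop (nhds 0) := by
    refine Real.tendsto_exp_neg_atTop_nhds_zero.comp ?_
    exact (tendsto_log_natCast.const_mul_atTop (by norm_num)).atTop_add_atTop
      (h2.const_mul_atTop (by norm_num))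
  refine h.congr' ?_
  filter_upwards [eventually_ge_atTop 2] with n hn
  rw [← log_dlt hn, Real.exp_log (dlt_pos hn)]

/-- An upper bound for the rescaled energy `(δ/ω²) log (1 + C²/δ²)` of a single jump that tends to
`4/3`; for `δ ≤ 1` it comes from `1 + C²/δ² ≤ (1 + C²)/δ²`. -/
lemma jump_cost_le (C : ℝ) {n : ℕ} (hn : 2 ≤ n) (hd : dlt n ≤ 1) :
    1 / omg n ^ 2 * (dlt n * Real.log (1 + (C / dlt n) ^ 2)) ≤
      Real.log (1 + C ^ 2) / Real.log n + 4 / 3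
        + 2 / 3 * (Real.log (Real.log n) / Real.log n) := by
  have h1 : (1 : ℝ) < n := by exact_mod_cast hn
  have h2 := Real.log_pos h1
  have hδ := dlt_pos hn
  have h3 : Real.log (1 + (C / dlt n) ^ 2) ≤
      Real.log (1 + C ^ 2) + 4 / 3 * Real.log n + 2 / 3 * Real.log (Real.log n) := by
    have : 1 + (C / dlt n) ^ 2 ≤ (1 + C ^ 2) / dlt n ^ 2 := by
      rw [div_pow, add_div]
      have : 1 ≤ 1 / dlt n ^ 2 := by
        rw [le_div_iff₀ (by positivity)]; nlinarith
      linarith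
    refine (Real.log_le_log (by positivity) this).trans (le_of_eq ?_)
    rw [Real.log_div (by positivity) (by positivity), Real.log_pow, log_dlt hn]
    push_cast; ring
  have h4 : 1 / omg n ^ 2 * (dlt n * Real.log (1 + (C / dlt n) ^ 2))
      = Real.log (1 + (C / dlt n) ^ 2) / Real.log n := by
    have := dlt_div_omg_sq hn
    calc _ = dlt n / omg n ^ 2 * Real.log (1 + (C / dlt n) ^ 2) := by ring
      _ = _ := by rw [this]; ring
  rw [h4, div_le_iff₀ h2]
  refine h3.trans (le_of_eq ?_)
  field_simp

lemma tendsto_jump_cost (C : ℝ) :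
    Tendsto (fun n : ℕ => Real.log (1 + C ^ 2) / Real.log n + 4 / 3
        + 2 / 3 * (Real.log (Real.log n) / Real.log n)) atTop (nhds (4 / 3)) := by
  have h1 : Tendsto (fun n : ℕ => Real.log (1 + C ^ 2) / Real.log n) atTop (nhds 0) :=
    tendsto_const_nhds.div_atTop tendsto_log_natCast
  have h2 : Tendsto (fun n : ℕ => Real.log (Real.log n) / Real.log n) atTop (nhds 0) :=
    (Real.isLittleO_log_id_atTop.tendsto_div_nhds_zero).comp tendsto_log_natCast
  have := (h1.add_const (4 / 3)).add (h2.const_mul (2 / 3))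
  simpa using this

lemma RDPM_sample_le {a b : ℝ} (hab : a < b) (s : Finset ℝ) (c : ℝ) (J : ℝ → ℝ) {n : ℕ}
    (hn : 2 ≤ n) :
    RDPM n a b (gridSample (dlt n) (stepFn s c J)) ≤
      s.card * (1 / omg n ^ 2 *
        (dlt n * Real.log (1 + ((∑ q ∈ s, |J q|) / dlt n) ^ 2))) := by
  have h := integral_log_Dd_sample_le (dlt_pos hn) hab s c J
  have h0 : 0 ≤ 1 / omg n ^ 2 := by positivity
  unfold RDPM
  refine (mul_le_mul_of_nonneg_left h h0).trans (le_of_eq ?_)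
  ring

/-! ### Convergence of the samples -/

lemma tendsto_lowGrid (x : ℝ) : Tendsto (fun n => lowGrid (dlt n) x) atTop (nhds x) := by
  have h : Tendsto (fun n => x - dlt n) atTop (nhds x) := by
    simpa using tendsto_dlt.const_sub x
  refine tendsto_of_tendsto_of_tendsto_of_le_of_le' h tendsto_const_nhds ?_ ?_
  · filter_upwards [eventually_ge_atTop 2] with n hn
    linarith [lt_lowGrid_add (dlt_pos hn) x]
  · filter_upwards [eventually_ge_atTop 2] with n hn using lowGrid_le (dlt_pos hn) x

lemma tendsto_integral_sample (a b : ℝ) {p : ℝ} (hp : 1 ≤ p) (s : Finset ℝ) (c : ℝ)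
    (J : ℝ → ℝ) :
    Tendsto (fun n => ∫ x in Set.Ioo a b,
      |gridSample (dlt n) (stepFn s c J) x - stepFn s c J x| ^ p) atTop (nhds 0) := by
  have hm := measurable_stepFn s c J
  have key := tendsto_integral_of_dominated_convergence (μ := volume.restrict (Set.Ioo a b))
    (F := fun n x => |gridSample (dlt n) (stepFn s c J) x - stepFn s c J x| ^ p) (f := fun _ => 0)
    (fun _ => (∑ q ∈ s, |J q|) ^ p) ?_ ?_ ?_ ?_
  · simpa using key
  · intro n
    have h1 : Measurable (gridSample (dlt n) (stepFn s c J)) := hm.comp (measurable_lowGrid _)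
    have h2 : Measurable fun x => |gridSample (dlt n) (stepFn s c J) x - stepFn s c J x| :=
      measurable_norm.comp (h1.sub hm)
    exact (h2.pow_const p).aestronglyMeasurable
  · exact integrable_const _
  · intro n
    refine Eventually.of_forall fun x => ?_
    rw [Real.norm_of_nonneg (by positivity)]
    exact Real.rpow_le_rpow (abs_nonneg _) (abs_stepFn_sub_le s c J _ _) (by linarith)
  · have hs : ∀ᵐ x ∂(volume.restrict (Set.Ioo a b)), x ∉ (s : Set ℝ) :=
      ae_restrict_of_ae (s.finite_toSet.countable.ae_notMem volume)
    filter_upwards [hs] with x hx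
    have h1 : Tendsto (fun n => gridSample (dlt n) (stepFn s c J) x) atTop (nhds (stepFn s c J x)) :=
      (continuousAt_stepFn (by simpa using hx)).tendsto.comp (tendsto_lowGrid x)
    have h2 := ((h1.sub_const (stepFn s c J x)).abs).rpow_const (p := p) (Or.inr (by linarith))
    simpa [Real.zero_rpow (by linarith : p ≠ 0)] using h2

/-- Limsup inequality: every step function `u ∈ S((a,b))` admits a
recovery sequence `u_n ∈ PC_{δ(n)}(a,b)` with `u_n → u` in `L^p((a,b))` and
`limsup RDPM_n((a,b),u_n) ≤ (4/3)·J((a,b),u)`. -/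
theorem rescaled_limsup_inequality
    (a b : ℝ) (hab : a < b) (p : ℝ) (hp : 1 ≤ p)
    (u : ℝ → ℝ) (hu : IsStep a b u) :
    ∃ useq : ℕ → ℝ → ℝ,
      (∀ n, 2 ≤ n → IsPC (dlt n) (useq n)) ∧
      Tendsto (fun n => ∫ x in Set.Ioo a b, |useq n x - u x| ^ p) atTop (nhds 0) ∧
      Filter.limsup (fun n => RDPM n a b (useq n)) atTop ≤
        (4 / 3 : ℝ) * ((jumpSet a b u).ncard : ℝ) := by
  obtain ⟨s, c, J, hs, hu'⟩ := hu
  refine ⟨fun n => gridSample (dlt n) (stepFn s c J), fun n hn => isPC_sample (dlt_pos hn) _, ?_, ?_⟩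
  · refine (tendsto_integral_sample a b hp s c J).congr fun n => ?_
    refine setIntegral_congr_fun measurableSet_Ioo fun x hx => ?_
    simp only [hu' x hx, stepFn]
  · rw [jumpSet_eq hs hu', Set.ncard_coe_finset]
    have hlim := (tendsto_jump_cost (∑ q ∈ s, |J q|)).const_mul (s.card : ℝ)
    rw [mul_comm (4 / 3 : ℝ), ← hlim.limsup_eq]
    refine limsup_le_limsup ?_ ?_ hlim.isBoundedUnder_le
    · filter_upwards [eventually_ge_atTop 2, tendsto_dlt.eventually_le_const one_pos] with n hn hd
      exact (RDPM_sample_le hab s c J hn).trans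
        (mul_le_mul_of_nonneg_left (jump_cost_le _ hn hd) (Nat.cast_nonneg _))
    · -- The energies are nonnegative, so their real `limsup` is not a junk value.
      refine IsBoundedUnder.isCoboundedUnder_le (isBoundedUnder_of_eventually_ge (a := 0) ?_)
      filter_upwards [eventually_ge_atTop 2] with n hn
      exact mul_nonneg (by positivity) (integral_log_Dd_nonneg (dlt_pos hn) hab _)

end PeronaMalik
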